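/- Let G = (V, E) be a finite directed graph with weight function w : E → ℝ, and assume G contains at least one cycle. Then the minimal cycle mean μ* is the maximum of the set { r ∈ ℝ : G contains no cycle of negative total weight with respect to the parametric weight function w_r }; that is, this set equals the interval (−∞, μ*] and its maximum is attained at μ*. -/

import Mathlib

variable {V : Type*}

/-- A cycle of length `k + 1` in the directed graph with edge relation `E`:
the vertices are `f 0, f 1, ..., f k, f 0` with indices taken cyclically. -/
def IsCycle (E : V → V → Prop) {k : ℕ} (f : Fin (k + 1) → V) : Prop :=
  ∀ i : Fin (k + 1), E (f i) (f (i + 1))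

/-- Total weight of a cycle with respect to the weight function `w`. -/
noncomputable def cycleWeight (w : V → V → ℝ) {k : ℕ} (f : Fin (k + 1) → V) : ℝ :=
  ∑ i : Fin (k + 1), w (f i) (f (i + 1))

/-- The cycle mean: total weight divided by the length `k + 1`. -/
noncomputable def cycleMean (w : V → V → ℝ) {k : ℕ} (f : Fin (k + 1) → V) : ℝ :=
  cycleWeight w f / (k + 1 : ℝ)

/-- `mu` is the minimal cycle mean of the graph: it is attained by some cycle and
it is a lower bound on the mean of every cycle. -/
def IsMinCycleMean (E : V → V → Prop) (w : V → V → ℝ) (mu : ℝ) : Prop :=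
  (∃ (k : ℕ) (f : Fin (k + 1) → V), IsCycle E f ∧ cycleMean w f = mu) ∧
  ∀ (k : ℕ) (f : Fin (k + 1) → V), IsCycle E f → mu ≤ cycleMean w f

/-- The set of real numbers `r` for which the graph has no cycle of negative
total weight with respect to the parametric weight function `w_r = w - r`. -/
def FeasibleSet (E : V → V → Prop) (w : V → V → ℝ) : Set ℝ :=
  {r : ℝ | ∀ (k : ℕ) (f : Fin (k + 1) → V), IsCycle E f →
    0 ≤ cycleWeight (fun u v => w u v - r) f}

/-!
Subtracting `r` from every edge weight lowers every cycle mean by `r`, so a cycle has nonnegative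
weight for `w_r` exactly when `r` is at most its mean. The feasible parameters are therefore the
lower bounds of the set of cycle means, of which `μ*` is the least element.
-/

/-- The set of means of all cycles of the graph. Its least element, if there is one, is the minimal
cycle mean, and its lower bounds are the feasible parameters. -/
def cycleMeans (E : V → V → Prop) (w : V → V → ℝ) : Set ℝ :=
  {m : ℝ | ∃ (k : ℕ) (f : Fin (k + 1) → V), IsCycle E f ∧ cycleMean w f = m}

theorem cycleWeight_sub_const (w : V → V → ℝ) (r : ℝ) {k : ℕ} (f : Fin (k + 1) → V) :
    cycleWeight (fun u v => w u v - r) f = cycleWeight w f - r * (k + 1) := by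
  simp [cycleWeight, mul_comm]

section

variable {E : V → V → Prop} {w : V → V → ℝ} {r mu : ℝ}

theorem mem_lowerBounds_cycleMeans :
    r ∈ lowerBounds (cycleMeans E w) ↔
      ∀ (k : ℕ) (f : Fin (k + 1) → V), IsCycle E f → r ≤ cycleMean w f := by
  constructor
  · intro hr k f hf
    exact hr ⟨k, f, hf, rfl⟩
  · rintro hr _ ⟨k, f, hf, rfl⟩
    exact hr k f hf

theorem isMinCycleMean_iff_isLeast_cycleMeans :
    IsMinCycleMean E w mu ↔ IsLeast (cycleMeans E w) mu :=
  and_congr_right' mem_lowerBounds_cycleMeans.symm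

theorem cycleWeight_sub_const_nonneg_iff {k : ℕ} {f : Fin (k + 1) → V} :
    0 ≤ cycleWeight (fun u v => w u v - r) f ↔ r ≤ cycleMean w f := by
  rw [cycleWeight_sub_const, sub_nonneg, cycleMean, le_div_iff₀ (by positivity)]

end

theorem feasibleSet_eq_lowerBounds_cycleMeans (E : V → V → Prop) (w : V → V → ℝ) :
    FeasibleSet E w = lowerBounds (cycleMeans E w) := by
  ext r
  simp only [FeasibleSet, Set.mem_ofPred_eq, cycleWeight_sub_const_nonneg_iff,
    mem_lowerBounds_cycleMeans]

theorem feasibleSet_eq_Iic_minCycleMean_general (E : V → V → Prop) (w : V → V → ℝ) (mu : ℝ)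
    (hmu : IsMinCycleMean E w mu) :
    FeasibleSet E w = Set.Iic mu ∧ IsGreatest (FeasibleSet E w) mu := by
  have hleast : IsLeast (cycleMeans E w) mu := isMinCycleMean_iff_isLeast_cycleMeans.1 hmu
  rw [feasibleSet_eq_lowerBounds_cycleMeans]
  exact ⟨hleast.lowerBounds_eq, hleast.isGLB⟩

/-- The set of feasible parameters equals the interval `(-∞, μ*]`, and its
maximum is attained at the minimal cycle mean `μ*`. -/
theorem feasibleSet_eq_Iic_minCycleMean [Fintype V] (E : V → V → Prop)
    (w : V → V → ℝ) (mu : ℝ) (hmu : IsMinCycleMean E w mu) :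
    FeasibleSet E w = Set.Iic mu ∧ IsGreatest (FeasibleSet E w) mu :=
  feasibleSet_eq_Iic_minCycleMean_general E w mu hmu
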